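/- The first Rayleigh quotient of the Dirichlet Laplacian on the Fichera layer admits the lower bound λ₁(Λ) ≥ inf_{L>−1} μ(L), where λ₁(Λ)=inf{∫_Λ|∇u|²dx / ∫_Λ|u|²dx : 0≠u∈H¹₀(Λ)} and μ(L) is the Sturm–Liouville ground energy μ(L):=inf{∫_L^∞(|q'(t)|²+λ(t)|q(t)|²)dt / ∫_L^∞|q(t)|²dt : 0≠q∈H¹(L,∞)} with potential λ(t):=λ₁(Γ_t). -/

import Mathlib

/-!
Up to the null set where two coordinates agree, `Λ` is the disjoint union of the sector where the
first coordinate is the largest and of its two images under cyclic rotations of the coordinates.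
The Dirichlet energy is invariant under these rotations, so it suffices to bound the energy of a
test function `u` on that sector from below by `inf μ` times its mass there.

The section of the sector at `x₁ = t` is the finite guide `Γ_t`, and `u(t,·)` vanishes on the
Dirichlet boundary of `Γ_t`; hence `∫ λ(x₁)u² ≤ ∫ (∂₂u)² + (∂₃u)²`. The fibre of the sector over
`p ∈ Γ` is the half-line `(L,∞)` with `L = max(p₁,p₂) > -1`, and `u(·,p)` is a trial function for
`μ(L)`; hence `inf μ · ∫ u² ≤ ∫ (∂₁u)² + λ(x₁)u²`. Adding the two inequalities gives the bound.

Tonelli's theorem requires the potential `λ` to be measurable. A trial function for `Γ_R` is also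
one for every smaller guide, so `λ` is upper semicontinuous from the left, which makes it Borel.
-/

noncomputable section
open MeasureTheory Set Real

/-- The interval `I = (-1,0)`. -/
def II : Set ℝ := Set.Ioo (-1) 0

/-- The broken guide `Γ = {x ∈ ℝ² : -1 < min(x₁,x₂) < 0}`. -/
def Gam : Set (ℝ × ℝ) := {p | -1 < min p.1 p.2 ∧ min p.1 p.2 < 0}

/-- The box `□_L = {x : max(|x₁+1|,|x₂+1|) < L}`. -/
def Box (L : ℝ) : Set (ℝ × ℝ) := {p | |p.1 + 1| < L ∧ |p.2 + 1| < L}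

/-- The finite guide `Γ_R = Γ ∩ □_{R+1}`. -/
def GamR (R : ℝ) : Set (ℝ × ℝ) := Gam ∩ Box (R + 1)

/-- The Neumann part `Σ_R = ∂Γ_R ∩ ∂□_{R+1}` of the boundary. -/
def Sig (R : ℝ) : Set (ℝ × ℝ) := frontier (GamR R) ∩ frontier (Box (R + 1))

/-- The Dirichlet part `∂Γ_R ∖ Σ_R` of the boundary. -/
def DirB (R : ℝ) : Set (ℝ × ℝ) := frontier (GamR R) \ Sig R

/-- Squared gradient `|∇u|² = (∂₁u)² + (∂₂u)²`. -/
def gradSq2 (u : ℝ × ℝ → ℝ) (p : ℝ × ℝ) : ℝ :=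
  (fderiv ℝ u p (1, 0)) ^ 2 + (fderiv ℝ u p (0, 1)) ^ 2

/-- Admissible functions for the mixed problem on `Γ_R`: `C¹` up to the boundary
(modelled by a globally `C¹` extension) vanishing on the Dirichlet part. -/
def AdmR (R : ℝ) (u : ℝ × ℝ → ℝ) : Prop :=
  ContDiff ℝ 1 u ∧ ∀ p ∈ DirB R, u p = 0

/-- First Rayleigh quotient `λ₁(Γ_R)` of the mixed Dirichlet–Neumann Laplacian on `Γ_R`. -/
def lamR (R : ℝ) : ℝ :=
  sInf {r | ∃ u : ℝ × ℝ → ℝ, AdmR R u ∧ (∫ p in GamR R, (u p) ^ 2) ≠ 0 ∧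
    r = (∫ p in GamR R, gradSq2 u p) / ∫ p in GamR R, (u p) ^ 2}

/-- First Rayleigh quotient `λ₁(Γ)` of the Dirichlet Laplacian on the broken guide `Γ`. -/
def lamG : ℝ :=
  sInf {r | ∃ u : ℝ × ℝ → ℝ, ContDiff ℝ 1 u ∧ HasCompactSupport u ∧ tsupport u ⊆ Gam ∧
    (∫ p in Gam, (u p) ^ 2) ≠ 0 ∧
    r = (∫ p in Gam, gradSq2 u p) / ∫ p in Gam, (u p) ^ 2}

/-- `ω = √(π² − λ₁(Γ))`. -/
def omega : ℝ := Real.sqrt (π ^ 2 - lamG)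

/-- The Fichera layer `Λ = {x ∈ ℝ³ : -1 < min(x₁,x₂,x₃) < 0}`. -/
def Lam3 : Set (ℝ × ℝ × ℝ) :=
  {x | -1 < min x.1 (min x.2.1 x.2.2) ∧ min x.1 (min x.2.1 x.2.2) < 0}

/-- The residual domain `Ω_R³ = {x : x₃ > R and (x₁,x₂) ∈ Γ_{x₃}}`. -/
def Om3 (R : ℝ) : Set (ℝ × ℝ × ℝ) := {x | R < x.2.2 ∧ (x.1, x.2.1) ∈ GamR x.2.2}

/-- Squared gradient in 3D: `|∇u|² = (∂₁u)² + (∂₂u)² + (∂₃u)²`. -/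
def gradSq3 (u : ℝ × ℝ × ℝ → ℝ) (x : ℝ × ℝ × ℝ) : ℝ :=
  (fderiv ℝ u x (1, 0, 0)) ^ 2 + (fderiv ℝ u x (0, 1, 0)) ^ 2 + (fderiv ℝ u x (0, 0, 1)) ^ 2

/-- Ground energy `μ(L)` of the Sturm–Liouville operator `q ↦ -q'' + λ q` on `(L,∞)`
with Neumann condition at `L` and potential `λ(t) = λ₁(Γ_t)`, defined as the infimum of
Rayleigh quotients over (`C¹` representatives of) `H¹(L,∞)`. -/
def muSL (L : ℝ) : ℝ :=
  sInf {r | ∃ q : ℝ → ℝ, ContDiff ℝ 1 q ∧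
    IntegrableOn (fun t => (q t) ^ 2) (Set.Ioi L) ∧
    IntegrableOn (fun t => (deriv q t) ^ 2) (Set.Ioi L) ∧
    (∫ t in Set.Ioi L, (q t) ^ 2) ≠ 0 ∧
    r = (∫ t in Set.Ioi L, ((deriv q t) ^ 2 + lamR t * (q t) ^ 2)) /
      ∫ t in Set.Ioi L, (q t) ^ 2}

/-- First Rayleigh quotient `λ₁(Λ)` of the Dirichlet Laplacian on the Fichera layer. -/
def lamLam : ℝ :=
  sInf {r | ∃ u : ℝ × ℝ × ℝ → ℝ, ContDiff ℝ 1 u ∧ HasCompactSupport u ∧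
    tsupport u ⊆ Lam3 ∧ (∫ x in Lam3, (u x) ^ 2) ≠ 0 ∧
    r = (∫ x in Lam3, gradSq3 u x) / ∫ x in Lam3, (u x) ^ 2}

open Filter Topology
open scoped ENNReal

/-! ### Measures and integrals -/

/-- A set that is open for the topology of left neighbourhoods differs from its interior only by
points that are isolated on the left. -/
lemma measurableSet_of_mem_nhdsLE {α : Type*} [TopologicalSpace α] [LinearOrder α]
    [OrderTopology α] [SecondCountableTopology α] [MeasurableSpace α] [OpensMeasurableSpace α]
    {s : Set α} (hs : ∀ x ∈ s, s ∈ 𝓝[≤] x) : MeasurableSet s := by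
  have hisolated : s \ interior s ⊆ {x ∈ s \ interior s | 𝓝[(s \ interior s) ∩ Iio x] x = ⊥} := by
    refine fun x hx => ⟨hx, empty_mem_iff_bot.1 ?_⟩
    have hleft : s ∈ 𝓝[<] x := nhdsWithin_mono x Iio_subset_Iic_self (hs x hx.1)
    have hinterior : interior s ∈ 𝓝[<] x := by
      filter_upwards [eventually_mem_nhdsWithin_iff.2 hleft, self_mem_nhdsWithin] with y hy hyx
      rwa [isOpen_Iio.nhdsWithin_eq hyx, ← mem_interior_iff_mem_nhds] at hy
    filter_upwards [nhdsWithin_mono x inter_subset_right hinterior, self_mem_nhdsWithin]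
      with y hy hy'
    exact hy'.1.2 hy
  rw [← union_sdiff_cancel (interior_subset (s := s))]
  exact isOpen_interior.measurableSet.union
    (countable_setOfPred_isolated_left_within.mono hisolated).measurableSet

lemma measurable_of_upperSemicontinuousWithinAt_Iic {α β : Type*}
    [TopologicalSpace α] [LinearOrder α] [OrderTopology α] [SecondCountableTopology α]
    [MeasurableSpace α] [OpensMeasurableSpace α]
    [TopologicalSpace β] [LinearOrder β] [OrderTopology β] [SecondCountableTopology β]
    [MeasurableSpace β] [BorelSpace β] {f : α → β}
    (hf : ∀ x, UpperSemicontinuousWithinAt f (Iic x) x) : Measurable f :=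
  measurable_of_Iio fun c => measurableSet_of_mem_nhdsLE fun x hx => hf x c hx

lemma continuousWithinAt_setIntegral_of_monotone {ι X E : Type*} [TopologicalSpace ι] [Preorder ι]
    [FirstCountableTopology ι] [MeasurableSpace X] {μ : Measure X} [NormedAddCommGroup E]
    [NormedSpace ℝ E] {A : ι → Set X} (hA : Monotone A) (hA_meas : ∀ i, MeasurableSet (A i))
    {i : ι} (hA_left : ∀ x ∈ A i, ∀ᶠ j in 𝓝[≤] i, x ∈ A j) {f : X → E}
    (hf : IntegrableOn f (A i) μ) :
    ContinuousWithinAt (fun j => ∫ x in A j, f x ∂μ) (Iic i) i := by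
  have hindicator (j : ι) (hj : j ≤ i) :
      ∫ x in A j, f x ∂μ = ∫ x in A i, (A j).indicator f x ∂μ := by
    rw [setIntegral_indicator (hA_meas j), inter_eq_self_of_subset_right (hA hj)]
  refine ContinuousWithinAt.congr ?_ hindicator (hindicator i le_rfl)
  refine tendsto_integral_filter_of_dominated_convergence (fun x => ‖f x‖) ?_ ?_ hf.norm ?_
  · exact .of_forall fun j => hf.aestronglyMeasurable.indicator (hA_meas j)
  · exact .of_forall fun j => .of_forall fun x => norm_indicator_le_norm_self f x
  · filter_upwards [ae_restrict_mem (hA_meas i)] with x hx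
    refine tendsto_const_nhds.congr' ?_
    filter_upwards [hA_left x hx] with j hj
    rw [indicator_of_mem hx, indicator_of_mem hj]

section Sections

variable {α β : Type*} [MeasurableSpace α] [MeasurableSpace β] {μ : Measure α} {ν : Measure β}
  [SFinite ν] {S : Set (α × β)} {f : α × β → ℝ≥0∞}

lemma setLIntegral_prod_eq_lintegral_section (hS : MeasurableSet S) (hf : Measurable f) :
    ∫⁻ x in S, f x ∂μ.prod ν = ∫⁻ a, ∫⁻ b in {b | (a, b) ∈ S}, f (a, b) ∂ν ∂μ := by
  rw [← lintegral_indicator hS, lintegral_prod _ (hf.indicator hS).aemeasurable]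
  refine lintegral_congr fun a => ?_
  exact lintegral_indicator (measurable_prodMk_left hS) fun b => f (a, b)

lemma setLIntegral_prod_eq_lintegral_section_symm [SFinite μ] (hS : MeasurableSet S)
    (hf : Measurable f) :
    ∫⁻ x in S, f x ∂μ.prod ν = ∫⁻ b, ∫⁻ a in {a | (a, b) ∈ S}, f (a, b) ∂μ ∂ν := by
  rw [← lintegral_indicator hS, lintegral_prod_symm _ (hf.indicator hS).aemeasurable]
  refine lintegral_congr fun b => ?_
  exact lintegral_indicator (measurable_prodMk_right hS) fun a => f (a, b)

end Sections

lemma ofReal_mul_lintegral_le_iff {α : Type*} [MeasurableSpace α] {μ : Measure α} {f g : α → ℝ}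
    (hf : Integrable f μ) (hf₀ : 0 ≤ f) (hg : Integrable g μ) (hg₀ : 0 ≤ g) {c : ℝ} :
    ENNReal.ofReal c * ∫⁻ x, ENNReal.ofReal (f x) ∂μ ≤ ∫⁻ x, ENNReal.ofReal (g x) ∂μ ↔
      c * ∫ x, f x ∂μ ≤ ∫ x, g x ∂μ := by
  rw [← ofReal_integral_eq_lintegral_ofReal hf (.of_forall hf₀),
    ← ofReal_integral_eq_lintegral_ofReal hg (.of_forall hg₀),
    ← ENNReal.ofReal_mul' (integral_nonneg hf₀), ENNReal.ofReal_le_ofReal_iff (integral_nonneg hg₀)]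

lemma ae_linearMap_ne_zero {E : Type*} [NormedAddCommGroup E] [NormedSpace ℝ E]
    [FiniteDimensional ℝ E] [MeasurableSpace E] [BorelSpace E] {μ : Measure E}
    [μ.IsAddHaarMeasure] {A : E →ₗ[ℝ] ℝ} (hA : A ≠ 0) : ∀ᵐ x ∂μ, A x ≠ 0 := by
  have hker := Measure.addHaar_submodule μ A.ker (mt LinearMap.ker_eq_top.1 hA)
  filter_upwards [measure_eq_zero_iff_ae_notMem.1 hker] with x hx
  exact hx

lemma sInf_mul_le_of_div_mem {S : Set ℝ} (hS : ∀ r ∈ S, 0 ≤ r) {a b : ℝ} (ha : 0 ≤ a)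
    (hb : 0 ≤ b) (hab : b ≠ 0 → a / b ∈ S) : sInf S * b ≤ a := by
  rcases hb.eq_or_lt with rfl | hb
  · rwa [mul_zero]
  · exact (le_div_iff₀ hb).1 (csInf_le ⟨0, hS⟩ (hab hb.ne'))

lemma integral_div_integral_sq_nonneg {α : Type*} [MeasurableSpace α] {μ : Measure α} {f : α → ℝ}
    (hf : 0 ≤ f) (u : α → ℝ) : 0 ≤ (∫ x, f x ∂μ) / ∫ x, u x ^ 2 ∂μ :=
  div_nonneg (integral_nonneg hf) (integral_nonneg fun x => sq_nonneg (u x))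

/-! ### Test functions -/

lemma hasCompactSupport_sq {X : Type*} [TopologicalSpace X] {f : X → ℝ}
    (hf : HasCompactSupport f) : HasCompactSupport fun x => f x ^ 2 :=
  hf.comp_left (g := (· ^ 2)) (zero_pow two_ne_zero)

lemma integrable_sq_of_hasCompactSupport {X : Type*} [TopologicalSpace X] [MeasurableSpace X]
    [OpensMeasurableSpace X] {μ : Measure X} [IsFiniteMeasureOnCompacts μ] {f : X → ℝ}
    (hf : Continuous f) (hf_supp : HasCompactSupport f) : Integrable (fun x => f x ^ 2) μ :=
  (hf.pow 2).integrable_of_hasCompactSupport (hasCompactSupport_sq hf_supp)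

lemma hasCompactSupport_comp_prodMk_right {X Y : Type*} [TopologicalSpace X] [R1Space X]
    [TopologicalSpace Y] {M : Type*} [Zero M] {v : X × Y → M} (hv : HasCompactSupport v) (y : Y) :
    HasCompactSupport fun x => v (x, y) := by
  refine HasCompactSupport.intro (hv.isCompact.image continuous_fst) fun x hx => ?_
  exact not_imp_comm.1 (fun h => ⟨(x, y), subset_tsupport v h, rfl⟩) hx

section TestFunctions

variable {E : Type*} [NormedAddCommGroup E] [NormedSpace ℝ E]

/-- The trial functions of a Dirichlet problem on `U`: `C¹` functions with compact support in `U`,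
regarded as functions on the whole space. -/
structure IsTestFunction (U : Set E) (u : E → ℝ) : Prop where
  contDiff : ContDiff ℝ 1 u
  hasCompactSupport : HasCompactSupport u
  tsupport_subset : tsupport u ⊆ U

lemma continuous_fderiv_apply_sq {u : E → ℝ} (hu : ContDiff ℝ 1 u) (e : E) :
    Continuous fun x => fderiv ℝ u x e ^ 2 :=
  ((hu.continuous_fderiv one_ne_zero).clm_apply continuous_const).pow 2

namespace IsTestFunction

variable {U : Set E} {u : E → ℝ}

lemma mem_of_ne_zero (hu : IsTestFunction U u) {x : E} (hx : u x ≠ 0) : x ∈ U :=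
  hu.tsupport_subset (subset_tsupport u hx)

lemma mono {V : Set E} (hu : IsTestFunction U u) (hUV : U ⊆ V) : IsTestFunction V u :=
  ⟨hu.contDiff, hu.hasCompactSupport, hu.tsupport_subset.trans hUV⟩

lemma comp_continuousLinearEquiv {F : Type*} [NormedAddCommGroup F] [NormedSpace ℝ F]
    (hu : IsTestFunction U u) (e : F ≃L[ℝ] E) : IsTestFunction (e ⁻¹' U) (u ∘ e) where
  contDiff := hu.contDiff.comp e.contDiff
  hasCompactSupport := hu.hasCompactSupport.comp_homeomorph e.toHomeomorph
  tsupport_subset :=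
    (tsupport_comp_subset_preimage u e.continuous).trans (preimage_mono hu.tsupport_subset)

variable [MeasurableSpace E] [OpensMeasurableSpace E] {μ : Measure E} [IsFiniteMeasureOnCompacts μ]

lemma integrable_sq (hu : IsTestFunction U u) : Integrable (fun x => u x ^ 2) μ :=
  integrable_sq_of_hasCompactSupport hu.contDiff.continuous hu.hasCompactSupport

lemma integrable_fderiv_apply_sq (hu : IsTestFunction U u) (e : E) :
    Integrable (fun x => fderiv ℝ u x e ^ 2) μ :=
  integrable_sq_of_hasCompactSupport
    ((hu.contDiff.continuous_fderiv one_ne_zero).clm_apply continuous_const)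
    (hu.hasCompactSupport.fderiv_apply ℝ e)

end IsTestFunction

lemma exists_isTestFunction [FiniteDimensional ℝ E] [MeasurableSpace E] [OpensMeasurableSpace E]
    {μ : Measure E} [IsFiniteMeasureOnCompacts μ] [μ.IsOpenPosMeasure] {U : Set E}
    (hU : IsOpen U) (hU' : U.Nonempty) :
    ∃ u, IsTestFunction U u ∧ ∫ x in U, u x ^ 2 ∂μ ≠ 0 := by
  obtain ⟨x, hx⟩ := hU'
  obtain ⟨u, hsub, hsupp, hu, -, hux⟩ := exists_contDiff_tsupport_subset (n := 1) (hU.mem_nhds hx)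
  have htest : IsTestFunction U u := ⟨hu, hsupp, hsub⟩
  have hpos : 0 < ∫ y, u y ^ 2 ∂μ :=
    (hu.continuous.pow 2).integral_pos_of_hasCompactSupport_nonneg_nonzero
      (hasCompactSupport_sq hsupp) (fun y => sq_nonneg (u y)) (x := x) (by simp [hux])
  refine ⟨u, htest, ?_⟩
  rw [setIntegral_eq_integral_of_forall_compl_eq_zero fun y hy => ?_]
  · exact hpos.ne'
  · rw [not_imp_comm.1 htest.mem_of_ne_zero hy, zero_pow two_ne_zero]

variable {F : Type*} [NormedAddCommGroup F] [NormedSpace ℝ F] {v : E × F → ℝ}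

lemma fderiv_comp_prodMk_left (hv : Differentiable ℝ v) (x : E) (y w : F) :
    fderiv ℝ (fun y => v (x, y)) y w = fderiv ℝ v (x, y) (0, w) := by
  have h := (hv (x, y)).hasFDerivAt.comp y (hasFDerivAt_prodMk_right x y)
  exact congr($(h.fderiv) w)

lemma deriv_comp_prodMk_right {v : ℝ × F → ℝ} (hv : Differentiable ℝ v) (t : ℝ) (y : F) :
    deriv (fun t => v (t, y)) t = fderiv ℝ v (t, y) (1, 0) := by
  exact ((hv (t, y)).hasFDerivAt.comp_hasDerivAt t
    ((hasDerivAt_id t).prodMk (hasDerivAt_const t y))).deriv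

end TestFunctions

/-! ### The mixed problem on the finite guides -/

lemma mem_Gam_iff {p : ℝ × ℝ} : p ∈ Gam ↔ (-1 < p.1 ∧ -1 < p.2) ∧ (p.1 < 0 ∨ p.2 < 0) := by
  simp only [Gam, mem_ofPred_eq, lt_min_iff, min_lt_iff]

lemma mem_GamR_iff {R : ℝ} {p : ℝ × ℝ} : p ∈ GamR R ↔ p ∈ Gam ∧ p.1 < R ∧ p.2 < R := by
  simp only [GamR, Box, mem_inter_iff, mem_ofPred_eq, mem_Gam_iff, abs_lt]
  grind

lemma isOpen_Gam : IsOpen Gam := by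
  have hmin : Continuous fun p : ℝ × ℝ => min p.1 p.2 := by fun_prop
  exact (isOpen_lt continuous_const hmin).inter (isOpen_lt hmin continuous_const)

lemma isOpen_Box (L : ℝ) : IsOpen (Box L) :=
  (isOpen_lt (f := fun p : ℝ × ℝ => |p.1 + 1|) (by fun_prop) continuous_const).inter
    (isOpen_lt (f := fun p : ℝ × ℝ => |p.2 + 1|) (by fun_prop) continuous_const)

lemma isOpen_GamR (R : ℝ) : IsOpen (GamR R) := isOpen_Gam.inter (isOpen_Box _)

lemma monotone_GamR : Monotone GamR := fun R R' hR p hp => by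
  rw [mem_GamR_iff] at hp ⊢
  exact ⟨hp.1, hp.2.1.trans_le hR, hp.2.2.trans_le hR⟩

lemma nonempty_GamR {R : ℝ} (hR : -1 < R) : (GamR R).Nonempty := by
  obtain ⟨a, ha, haR⟩ := exists_between (lt_min hR neg_one_lt_zero)
  rw [lt_min_iff] at haR
  exact ⟨(a, a), mem_GamR_iff.2 ⟨mem_Gam_iff.2 ⟨⟨ha, ha⟩, .inl haR.2⟩, haR.1, haR.1⟩⟩

lemma GamR_eq_empty {R : ℝ} (hR : R ≤ -1) : GamR R = ∅ := by
  refine eq_empty_of_forall_notMem fun p hp => ?_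
  rw [mem_GamR_iff, mem_Gam_iff] at hp
  linarith [hp.1.1.1, hp.2.1]

lemma DirB_eq_frontier_inter (R : ℝ) : DirB R = frontier Gam ∩ Box (R + 1) := by
  have hsub : frontier (GamR R) ⊆ closure (Box (R + 1)) :=
    frontier_subset_closure.trans (closure_mono inter_subset_right)
  rw [DirB, Sig, sdiff_self_inter, ← frontier_inter_open_inter (isOpen_Box _), ← GamR,
    ← inter_eq_self_of_subset_left hsub, inter_sdiff_assoc, closure_sdiff_frontier,
    (isOpen_Box _).interior_eq, inter_eq_self_of_subset_left hsub]

lemma notMem_Gam_of_mem_DirB {R : ℝ} {p : ℝ × ℝ} (hp : p ∈ DirB R) : p ∉ Gam := by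
  rw [DirB_eq_frontier_inter, isOpen_Gam.frontier_eq] at hp
  exact hp.1.2

lemma lt_of_mem_DirB {R : ℝ} {p : ℝ × ℝ} (hp : p ∈ DirB R) : p.1 < R ∧ p.2 < R := by
  rw [DirB_eq_frontier_inter] at hp
  exact ⟨lt_of_add_lt_add_right (abs_lt.1 hp.2.1).2, lt_of_add_lt_add_right (abs_lt.1 hp.2.2).2⟩

lemma monotone_DirB : Monotone DirB := fun R R' hR => by
  simp only [DirB_eq_frontier_inter]
  have hBox : Box (R + 1) ⊆ Box (R' + 1) := fun p hp =>
    ⟨hp.1.trans_le (by gcongr), hp.2.trans_le (by gcongr)⟩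
  exact inter_subset_inter_right _ hBox

lemma integrableOn_GamR {f : ℝ × ℝ → ℝ} (hf : Continuous f) (R : ℝ) : IntegrableOn f (GamR R) := by
  refine (hf.integrableOn_Icc (a := (-1, -1)) (b := (R, R))).mono_set fun p hp => ?_
  rw [mem_GamR_iff, mem_Gam_iff] at hp
  exact ⟨⟨hp.1.1.1.le, hp.1.1.2.le⟩, ⟨hp.2.1.le, hp.2.2.le⟩⟩

lemma continuousWithinAt_setIntegral_GamR {f : ℝ × ℝ → ℝ} (hf : Continuous f) (R : ℝ) :
    ContinuousWithinAt (fun s => ∫ p in GamR s, f p) (Iic R) R := by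
  refine continuousWithinAt_setIntegral_of_monotone monotone_GamR
    (fun s => (isOpen_GamR s).measurableSet) (fun p hp => ?_) (integrableOn_GamR hf R)
  rw [mem_GamR_iff] at hp
  filter_upwards [mem_nhdsWithin_of_mem_nhds (Ioi_mem_nhds hp.2.1),
    mem_nhdsWithin_of_mem_nhds (Ioi_mem_nhds hp.2.2)] with s hs₁ hs₂
  exact mem_GamR_iff.2 ⟨hp.1, hs₁, hs₂⟩

lemma gradSq2_nonneg (u : ℝ × ℝ → ℝ) : 0 ≤ gradSq2 u := fun p => by
  unfold gradSq2; positivity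

lemma continuous_gradSq2 {u : ℝ × ℝ → ℝ} (hu : ContDiff ℝ 1 u) : Continuous (gradSq2 u) :=
  (continuous_fderiv_apply_sq hu _).add (continuous_fderiv_apply_sq hu _)

lemma AdmR.mono {R R' : ℝ} {u : ℝ × ℝ → ℝ} (hu : AdmR R u) (hR : R' ≤ R) : AdmR R' u :=
  ⟨hu.1, fun p hp => hu.2 p (monotone_DirB hR hp)⟩

lemma IsTestFunction.admR {u : ℝ × ℝ → ℝ} (hu : IsTestFunction Gam u) (R : ℝ) : AdmR R u :=
  ⟨hu.contDiff, fun _ hp => not_imp_comm.1 hu.mem_of_ne_zero (notMem_Gam_of_mem_DirB hp)⟩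

lemma lamR_mul_integral_sq_le {R : ℝ} {u : ℝ × ℝ → ℝ} (hu : AdmR R u) :
    lamR R * ∫ p in GamR R, u p ^ 2 ≤ ∫ p in GamR R, gradSq2 u p := by
  refine sInf_mul_le_of_div_mem ?_ (integral_nonneg (gradSq2_nonneg u))
    (integral_nonneg fun p => sq_nonneg (u p)) fun hne => ⟨u, hu, hne, rfl⟩
  rintro _ ⟨w, -, -, rfl⟩
  exact integral_div_integral_sq_nonneg (gradSq2_nonneg w) w

lemma lamR_le_div {R : ℝ} {u : ℝ × ℝ → ℝ} (hu : AdmR R u) (hne : ∫ p in GamR R, u p ^ 2 ≠ 0) :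
    lamR R ≤ (∫ p in GamR R, gradSq2 u p) / ∫ p in GamR R, u p ^ 2 :=
  (le_div_iff₀ ((integral_nonneg fun p => sq_nonneg (u p)).lt_of_ne' hne)).2
    (lamR_mul_integral_sq_le hu)

lemma lamR_nonneg (R : ℝ) : 0 ≤ lamR R := by
  refine Real.sInf_nonneg ?_
  rintro _ ⟨u, -, -, rfl⟩
  exact integral_div_integral_sq_nonneg (gradSq2_nonneg u) u

lemma exists_admR_div_lt_of_lamR_lt {R c : ℝ} (hR : -1 < R) (hc : lamR R < c) :
    ∃ u, AdmR R u ∧ ∫ p in GamR R, u p ^ 2 ≠ 0 ∧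
      (∫ p in GamR R, gradSq2 u p) / ∫ p in GamR R, u p ^ 2 < c := by
  obtain ⟨u₀, hu₀, hu₀_ne⟩ := exists_isTestFunction (μ := volume) (isOpen_GamR R) (nonempty_GamR hR)
  by_contra! hle
  refine hc.not_ge (le_csInf ⟨_, u₀, (hu₀.mono inter_subset_left).admR R, hu₀_ne, rfl⟩ ?_)
  rintro _ ⟨u, hu, hu_ne, rfl⟩
  exact hle u hu hu_ne

/-- The infimum defining `lamR R` runs over the empty set here. -/
lemma lamR_eq_zero {R : ℝ} (hR : R ≤ -1) : lamR R = 0 := by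
  simp [lamR, GamR_eq_empty hR]

/-- A trial function for `Γ_R` is one for every smaller guide `Γ_s`, and its Rayleigh quotient
depends continuously on `s`. -/
lemma upperSemicontinuousWithinAt_lamR (R : ℝ) : UpperSemicontinuousWithinAt lamR (Iic R) R := by
  intro c hc
  rcases le_or_gt R (-1) with hR | hR
  · filter_upwards [self_mem_nhdsWithin] with s hs
    rwa [lamR_eq_zero (hs.trans hR), ← lamR_eq_zero hR]
  obtain ⟨u, hu, hu_ne, hlt⟩ := exists_admR_div_lt_of_lamR_lt hR hc
  have hmass := continuousWithinAt_setIntegral_GamR (hu.1.continuous.pow 2) R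
  have henergy := continuousWithinAt_setIntegral_GamR (continuous_gradSq2 hu.1) R
  filter_upwards [hmass.eventually_ne hu_ne,
    (henergy.div hmass hu_ne).eventually_lt_const hlt, self_mem_nhdsWithin] with s hs_ne hs_lt hs
  exact (lamR_le_div (hu.mono hs) hs_ne).trans_lt hs_lt

lemma measurable_lamR : Measurable lamR :=
  measurable_of_upperSemicontinuousWithinAt_Iic upperSemicontinuousWithinAt_lamR

/-- A test function on `Γ_L` is a trial function for every `Γ_t` with `t ≥ L`, always with the same
Rayleigh quotient. -/
lemma exists_forall_lamR_le {L : ℝ} (hL : -1 < L) : ∃ C, ∀ t, L ≤ t → lamR t ≤ C := by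
  obtain ⟨u, hu, hu_ne⟩ := exists_isTestFunction (μ := volume) (isOpen_GamR L) (nonempty_GamR hL)
  refine ⟨(∫ p in GamR L, gradSq2 u p) / ∫ p in GamR L, u p ^ 2, fun t ht => ?_⟩
  have hmass : ∫ p in GamR t, u p ^ 2 = ∫ p in GamR L, u p ^ 2 := by
    refine setIntegral_eq_of_subset_of_forall_sdiff_eq_zero (isOpen_GamR t).measurableSet
      (monotone_GamR ht) fun p hp => ?_
    rw [not_imp_comm.1 hu.mem_of_ne_zero hp.2, zero_pow two_ne_zero]
  have henergy : ∫ p in GamR t, gradSq2 u p = ∫ p in GamR L, gradSq2 u p := by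
    refine setIntegral_eq_of_subset_of_forall_sdiff_eq_zero (isOpen_GamR t).measurableSet
      (monotone_GamR ht) fun p hp => ?_
    simp [gradSq2, fderiv_of_notMem_tsupport ℝ fun h => hp.2 (hu.tsupport_subset h)]
  rw [← hmass, ← henergy]
  exact lamR_le_div ((hu.mono inter_subset_left).admR t) (hmass ▸ hu_ne)

/-! ### The Sturm–Liouville problem -/

lemma integrableOn_lamR_mul {L : ℝ} (hL : -1 < L) {f : ℝ → ℝ} (hf : IntegrableOn f (Ioi L)) :
    IntegrableOn (fun t => lamR t * f t) (Ioi L) := by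
  obtain ⟨C, hC⟩ := exists_forall_lamR_le hL
  refine hf.bdd_mul measurable_lamR.aestronglyMeasurable (c := C) ?_
  filter_upwards [ae_restrict_mem measurableSet_Ioi] with t ht
  rw [Real.norm_of_nonneg (lamR_nonneg t)]
  exact hC t ht.le

lemma energyDensity_nonneg (q : ℝ → ℝ) : 0 ≤ fun t => deriv q t ^ 2 + lamR t * q t ^ 2 :=
  fun t => add_nonneg (sq_nonneg _) (mul_nonneg (lamR_nonneg t) (sq_nonneg _))

lemma muSL_mul_integral_sq_le {L : ℝ} {q : ℝ → ℝ} (hq : ContDiff ℝ 1 q)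
    (hq_int : IntegrableOn (fun t => q t ^ 2) (Ioi L))
    (hq'_int : IntegrableOn (fun t => deriv q t ^ 2) (Ioi L)) :
    muSL L * ∫ t in Ioi L, q t ^ 2 ≤ ∫ t in Ioi L, (deriv q t ^ 2 + lamR t * q t ^ 2) := by
  refine sInf_mul_le_of_div_mem ?_ (integral_nonneg (energyDensity_nonneg q))
    (integral_nonneg fun t => sq_nonneg (q t)) fun hne => ⟨q, hq, hq_int, hq'_int, hne, rfl⟩
  rintro _ ⟨q, -, -, -, -, rfl⟩
  exact integral_div_integral_sq_nonneg (energyDensity_nonneg q) q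

lemma muSL_nonneg (L : ℝ) : 0 ≤ muSL L := by
  refine Real.sInf_nonneg ?_
  rintro _ ⟨q, -, -, -, -, rfl⟩
  exact integral_div_integral_sq_nonneg (energyDensity_nonneg q) q

lemma ofReal_mul_setLIntegral_Ioi_sq_le {m L : ℝ} (hm : m ≤ muSL L) (hL : -1 < L) {q : ℝ → ℝ}
    (hq : ContDiff ℝ 1 q) (hq_supp : HasCompactSupport q) :
    ENNReal.ofReal m * ∫⁻ t in Ioi L, ENNReal.ofReal (q t ^ 2) ≤
      ∫⁻ t in Ioi L, ENNReal.ofReal (deriv q t ^ 2 + lamR t * q t ^ 2) := by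
  have hq_int : IntegrableOn (fun t => q t ^ 2) (Ioi L) :=
    (integrable_sq_of_hasCompactSupport hq.continuous hq_supp).integrableOn
  have hq'_int : IntegrableOn (fun t => deriv q t ^ 2) (Ioi L) :=
    (integrable_sq_of_hasCompactSupport (hq.continuous_deriv le_rfl) hq_supp.deriv).integrableOn
  refine (ofReal_mul_lintegral_le_iff hq_int (fun t => sq_nonneg (q t))
    (hq'_int.add (integrableOn_lamR_mul hL hq_int)) (energyDensity_nonneg q)).2 ?_
  calc m * ∫ t in Ioi L, q t ^ 2 ≤ muSL L * ∫ t in Ioi L, q t ^ 2 :=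
        mul_le_mul_of_nonneg_right hm (integral_nonneg fun t => sq_nonneg (q t))
    _ ≤ ∫ t in Ioi L, (deriv q t ^ 2 + lamR t * q t ^ 2) :=
        muSL_mul_integral_sq_le hq hq_int hq'_int

lemma sInf_muSL_le {L : ℝ} (hL : -1 < L) :
    sInf {m | ∃ L : ℝ, -1 < L ∧ m = muSL L} ≤ muSL L := by
  refine csInf_le ⟨0, ?_⟩ ⟨L, hL, rfl⟩
  rintro _ ⟨L', -, rfl⟩
  exact muSL_nonneg L'

/-! ### The sector of the layer where the first coordinate is the largest -/

/-- The part `{x ∈ Λ : x₁ > max(x₂,x₃)}` of the Fichera layer; its section at `x₁ = t` is the finite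
guide `Γ_t`, and its fibre over `(x₂,x₃) ∈ Γ` is the half-line `x₁ > max(x₂,x₃)`. -/
def Sector : Set (ℝ × ℝ × ℝ) := {x | x.2 ∈ GamR x.1}

lemma mem_Sector_iff {x : ℝ × ℝ × ℝ} : x ∈ Sector ↔ x.2 ∈ Gam ∧ max x.2.1 x.2.2 < x.1 := by
  rw [max_lt_iff]
  exact mem_GamR_iff

lemma measurableSet_Sector : MeasurableSet Sector := by
  have h : Sector = {x | x.2 ∈ Gam} ∩ {x | max x.2.1 x.2.2 < x.1} := ext fun x => mem_Sector_iff
  rw [h]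
  exact (measurable_snd isOpen_Gam.measurableSet).inter
    (measurableSet_lt (by fun_prop) (by fun_prop))

lemma setLIntegral_Sector_eq_lintegral_GamR {f : ℝ × ℝ × ℝ → ℝ≥0∞} (hf : Measurable f) :
    ∫⁻ x in Sector, f x = ∫⁻ t, ∫⁻ p in GamR t, f (t, p) :=
  setLIntegral_prod_eq_lintegral_section measurableSet_Sector hf

lemma setLIntegral_Sector_eq_lintegral_Ioi {f : ℝ × ℝ × ℝ → ℝ≥0∞} (hf : Measurable f) :
    ∫⁻ x in Sector, f x = ∫⁻ p in Gam, ∫⁻ t in Ioi (max p.1 p.2), f (t, p) := by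
  rw [Measure.volume_eq_prod, setLIntegral_prod_eq_lintegral_section_symm measurableSet_Sector hf,
    ← lintegral_indicator isOpen_Gam.measurableSet]
  refine lintegral_congr fun p => ?_
  by_cases hp : p ∈ Gam <;> simp [mem_Sector_iff, hp, Ioi]

lemma mem_Lam3_iff {x : ℝ × ℝ × ℝ} : x ∈ Lam3 ↔
    (-1 < x.1 ∧ -1 < x.2.1 ∧ -1 < x.2.2) ∧ (x.1 < 0 ∨ x.2.1 < 0 ∨ x.2.2 < 0) := by
  simp only [Lam3, mem_ofPred_eq, lt_min_iff, min_lt_iff]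

lemma gradSq3_nonneg (u : ℝ × ℝ × ℝ → ℝ) : 0 ≤ gradSq3 u := fun x => by
  simp only [gradSq3, Pi.zero_apply]; positivity

lemma gradSq2_comp_prodMk {u : ℝ × ℝ × ℝ → ℝ} (hu : Differentiable ℝ u) (t : ℝ) (p : ℝ × ℝ) :
    gradSq2 (fun p => u (t, p)) p =
      fderiv ℝ u (t, p) (0, 1, 0) ^ 2 + fderiv ℝ u (t, p) (0, 0, 1) ^ 2 := by
  rw [gradSq2, fderiv_comp_prodMk_left hu, fderiv_comp_prodMk_left hu]

lemma admR_comp_prodMk {u : ℝ × ℝ × ℝ → ℝ} (hu : IsTestFunction Lam3 u) (t : ℝ) :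
    AdmR t fun p => u (t, p) := by
  refine ⟨hu.contDiff.comp (contDiff_const.prodMk contDiff_id), fun p hp => ?_⟩
  by_contra hne
  have hΛ := mem_Lam3_iff.1 (hu.mem_of_ne_zero hne)
  have hlt := lt_of_mem_DirB hp
  refine notMem_Gam_of_mem_DirB hp (mem_Gam_iff.2 ?_)
  grind

section SectorBound

variable {u : ℝ × ℝ × ℝ → ℝ}

lemma measurable_ofReal_lamR_mul_sq (hu : Continuous u) :
    Measurable fun x : ℝ × ℝ × ℝ => ENNReal.ofReal (lamR x.1 * u x ^ 2) :=
  ((measurable_lamR.comp measurable_fst).mul (hu.measurable.pow_const 2)).ennreal_ofReal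

lemma setLIntegral_Sector_lamR_mul_sq_le (hu : IsTestFunction Lam3 u) :
    ∫⁻ x in Sector, ENNReal.ofReal (lamR x.1 * u x ^ 2) ≤
      ∫⁻ x in Sector,
        ENNReal.ofReal (fderiv ℝ u x (0, 1, 0) ^ 2 + fderiv ℝ u x (0, 0, 1) ^ 2) := by
  have hgrad : Continuous fun x => fderiv ℝ u x (0, 1, 0) ^ 2 + fderiv ℝ u x (0, 0, 1) ^ 2 :=
    (continuous_fderiv_apply_sq hu.contDiff _).add (continuous_fderiv_apply_sq hu.contDiff _)
  rw [setLIntegral_Sector_eq_lintegral_GamR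
      (measurable_ofReal_lamR_mul_sq hu.contDiff.continuous),
    setLIntegral_Sector_eq_lintegral_GamR hgrad.measurable.ennreal_ofReal]
  refine lintegral_mono fun t => ?_
  have hadm := admR_comp_prodMk hu t
  simp only [← gradSq2_comp_prodMk (hu.contDiff.differentiable one_ne_zero),
    ENNReal.ofReal_mul (lamR_nonneg t)]
  rw [lintegral_const_mul' _ _ ENNReal.ofReal_ne_top]
  exact (ofReal_mul_lintegral_le_iff (integrableOn_GamR (hadm.1.continuous.pow 2) t)
    (fun p => sq_nonneg _) (integrableOn_GamR (continuous_gradSq2 hadm.1) t)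
    (gradSq2_nonneg _)).2 (lamR_mul_integral_sq_le hadm)

lemma ofReal_mul_setLIntegral_Sector_sq_le {m : ℝ} (hm : ∀ L, -1 < L → m ≤ muSL L)
    (hu : ContDiff ℝ 1 u) (hu_supp : HasCompactSupport u) :
    ENNReal.ofReal m * ∫⁻ x in Sector, ENNReal.ofReal (u x ^ 2) ≤
      ∫⁻ x in Sector, ENNReal.ofReal (fderiv ℝ u x (1, 0, 0) ^ 2 + lamR x.1 * u x ^ 2) := by
  have hdensity : Measurable fun x : ℝ × ℝ × ℝ =>
      ENNReal.ofReal (fderiv ℝ u x (1, 0, 0) ^ 2 + lamR x.1 * u x ^ 2) :=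
    ((continuous_fderiv_apply_sq hu _).measurable.add
      ((measurable_lamR.comp measurable_fst).mul
        (hu.continuous.measurable.pow_const 2))).ennreal_ofReal
  have hmass : Measurable fun x => ENNReal.ofReal (u x ^ 2) :=
    (hu.continuous.measurable.pow_const 2).ennreal_ofReal
  rw [setLIntegral_Sector_eq_lintegral_Ioi hdensity, setLIntegral_Sector_eq_lintegral_Ioi hmass,
    ← lintegral_const_mul' _ _ ENNReal.ofReal_ne_top]
  refine setLIntegral_mono' isOpen_Gam.measurableSet fun p hp => ?_
  have hL : -1 < max p.1 p.2 := (mem_Gam_iff.1 hp).1.1.trans_le (le_max_left _ _)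
  have hslice := ofReal_mul_setLIntegral_Ioi_sq_le (q := fun t => u (t, p)) (hm _ hL) hL
    (hu.comp (contDiff_id.prodMk contDiff_const)) (hasCompactSupport_comp_prodMk_right hu_supp p)
  simpa only [deriv_comp_prodMk_right (hu.differentiable one_ne_zero), Prod.mk_zero_zero]
    using hslice

lemma ofReal_mul_setLIntegral_Sector_le {m : ℝ} (hm : ∀ L, -1 < L → m ≤ muSL L)
    (hu : IsTestFunction Lam3 u) :
    ENNReal.ofReal m * ∫⁻ x in Sector, ENNReal.ofReal (u x ^ 2) ≤
      ∫⁻ x in Sector, ENNReal.ofReal (gradSq3 u x) := by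
  have hd₁ : Measurable fun x => ENNReal.ofReal (fderiv ℝ u x (1, 0, 0) ^ 2) :=
    (continuous_fderiv_apply_sq hu.contDiff _).measurable.ennreal_ofReal
  calc ENNReal.ofReal m * ∫⁻ x in Sector, ENNReal.ofReal (u x ^ 2)
      ≤ ∫⁻ x in Sector, ENNReal.ofReal (fderiv ℝ u x (1, 0, 0) ^ 2 + lamR x.1 * u x ^ 2) :=
        ofReal_mul_setLIntegral_Sector_sq_le hm hu.contDiff hu.hasCompactSupport
    _ = (∫⁻ x in Sector, ENNReal.ofReal (fderiv ℝ u x (1, 0, 0) ^ 2)) +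
          ∫⁻ x in Sector, ENNReal.ofReal (lamR x.1 * u x ^ 2) := by
        rw [← lintegral_add_left hd₁]
        exact lintegral_congr fun x =>
          ENNReal.ofReal_add (sq_nonneg _) (mul_nonneg (lamR_nonneg _) (sq_nonneg _))
    _ ≤ (∫⁻ x in Sector, ENNReal.ofReal (fderiv ℝ u x (1, 0, 0) ^ 2)) +
          ∫⁻ x in Sector,
            ENNReal.ofReal (fderiv ℝ u x (0, 1, 0) ^ 2 + fderiv ℝ u x (0, 0, 1) ^ 2) :=
        add_le_add le_rfl (setLIntegral_Sector_lamR_mul_sq_le hu)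
    _ = ∫⁻ x in Sector, ENNReal.ofReal (gradSq3 u x) := by
        rw [← lintegral_add_left hd₁]
        refine lintegral_congr fun x => ?_
        rw [gradSq3, add_assoc]
        exact (ENNReal.ofReal_add (sq_nonneg _) (by positivity)).symm

end SectorBound

/-! ### Decomposition of the layer into rotated sectors -/

/-- The cyclic rotation `(x₁,x₂,x₃) ↦ (x₂,x₃,x₁)` of the coordinates. -/
def rotate : (ℝ × ℝ × ℝ) ≃L[ℝ] ℝ × ℝ × ℝ :=
  (ContinuousLinearEquiv.prodComm ℝ ℝ (ℝ × ℝ)).trans (ContinuousLinearEquiv.prodAssoc ℝ ℝ ℝ ℝ)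

lemma rotate_apply (x : ℝ × ℝ × ℝ) : rotate x = (x.2.1, x.2.2, x.1) := rfl

lemma rotate_symm_apply (x : ℝ × ℝ × ℝ) : rotate.symm x = (x.2.2, x.1, x.2.1) := rfl

lemma measurePreserving_rotate : MeasurePreserving rotate :=
  (volume_preserving_prodAssoc (α₁ := ℝ) (β₁ := ℝ) (γ₁ := ℝ)).comp
    (Measure.measurePreserving_swap (μ := (volume : Measure ℝ)) (ν := (volume : Measure (ℝ × ℝ))))

lemma setLIntegral_preimage_rotate_symm (S : Set (ℝ × ℝ × ℝ)) (f : ℝ × ℝ × ℝ → ℝ≥0∞) :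
    ∫⁻ x in rotate.symm ⁻¹' S, f x = ∫⁻ x in S, f (rotate x) := by
  have h := measurePreserving_rotate.setLIntegral_comp_preimage_emb
    rotate.toHomeomorph.measurableEmbedding f (rotate.symm ⁻¹' S)
  rw [← h]
  simp [preimage_preimage]

lemma gradSq3_comp_rotate (u : ℝ × ℝ × ℝ → ℝ) (x : ℝ × ℝ × ℝ) :
    gradSq3 (u ∘ rotate) x = gradSq3 u (rotate x) := by
  simp only [gradSq3, rotate.comp_right_fderiv, ContinuousLinearMap.comp_apply,
    ContinuousLinearEquiv.coe_coe, rotate_apply]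
  ring

lemma isTestFunction_comp_rotate {u : ℝ × ℝ × ℝ → ℝ} (hu : IsTestFunction Lam3 u) :
    IsTestFunction Lam3 (u ∘ rotate) := by
  refine (hu.comp_continuousLinearEquiv rotate).mono fun x hx => ?_
  simp only [mem_preimage, mem_Lam3_iff, rotate_apply] at hx ⊢
  tauto

lemma ae_coordinates_ne : ∀ᵐ x : ℝ × ℝ × ℝ, x.1 ≠ x.2.1 ∧ x.2.1 ≠ x.2.2 ∧ x.2.2 ≠ x.1 := by
  have h₁₂ : ∀ᵐ x : ℝ × ℝ × ℝ, x.1 ≠ x.2.1 := by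
    have : (volume : Measure (ℝ × ℝ × ℝ)).IsAddHaarMeasure :=
      Measure.prod.instIsAddHaarMeasure (volume : Measure ℝ) (volume : Measure (ℝ × ℝ))
    let A : (ℝ × ℝ × ℝ) →ₗ[ℝ] ℝ :=
      LinearMap.fst ℝ ℝ (ℝ × ℝ) - LinearMap.fst ℝ ℝ ℝ ∘ₗ LinearMap.snd ℝ ℝ (ℝ × ℝ)
    have hA : A ≠ 0 := fun h => by simpa [A] using congr($h (1, 0, 0))
    filter_upwards [ae_linearMap_ne_zero hA] with x hx
    exact sub_ne_zero.1 hx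
  have h₂₃ := measurePreserving_rotate.quasiMeasurePreserving.ae h₁₂
  have h₃₁ := measurePreserving_rotate.quasiMeasurePreserving.ae h₂₃
  exact h₁₂.and (h₂₃.and h₃₁)

lemma Lam3_ae_eq_union_rotate : Lam3 =ᵐ[volume]
    (Sector ∪ rotate.symm ⁻¹' Sector ∪ rotate.symm ⁻¹' (rotate.symm ⁻¹' Sector) :
      Set (ℝ × ℝ × ℝ)) := by
  filter_upwards [ae_coordinates_ne] with x hx
  refine propext ?_
  change x ∈ Lam3 ↔ x ∈ Sector ∪ rotate.symm ⁻¹' Sector ∪ rotate.symm ⁻¹' (rotate.symm ⁻¹' Sector)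
  simp only [mem_union, mem_preimage, mem_Sector_iff, mem_Gam_iff, mem_Lam3_iff,
    rotate_symm_apply, max_lt_iff]
  grind

lemma setLIntegral_Lam3_eq (f : ℝ × ℝ × ℝ → ℝ≥0∞) :
    ∫⁻ x in Lam3, f x = (∫⁻ x in Sector, f x) + (∫⁻ x in Sector, f (rotate x)) +
      ∫⁻ x in Sector, f (rotate (rotate x)) := by
  have hmeas : Measurable rotate.symm := rotate.symm.continuous.measurable
  have hdisj : Disjoint Sector (rotate.symm ⁻¹' Sector) := by
    simp only [Set.disjoint_left, mem_preimage, mem_Sector_iff, rotate_symm_apply, max_lt_iff]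
    grind
  have hdisj' : Disjoint (Sector ∪ rotate.symm ⁻¹' Sector)
      (rotate.symm ⁻¹' (rotate.symm ⁻¹' Sector)) := by
    simp only [Set.disjoint_left, mem_union, mem_preimage, mem_Sector_iff, rotate_symm_apply,
      max_lt_iff]
    grind
  rw [setLIntegral_congr Lam3_ae_eq_union_rotate,
    lintegral_union (hmeas (hmeas measurableSet_Sector)) hdisj',
    lintegral_union (hmeas measurableSet_Sector) hdisj]
  simp only [setLIntegral_preimage_rotate_symm]

lemma isOpen_Lam3 : IsOpen Lam3 := by
  have hmin : Continuous fun x : ℝ × ℝ × ℝ => min x.1 (min x.2.1 x.2.2) := by fun_prop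
  exact (isOpen_lt continuous_const hmin).inter (isOpen_lt hmin continuous_const)

lemma nonempty_Lam3 : Lam3.Nonempty :=
  ⟨(-1 / 2, 0, 0), mem_Lam3_iff.2 (by norm_num)⟩

lemma mul_integral_sq_le_integral_gradSq3 {m : ℝ} (hm : ∀ L, -1 < L → m ≤ muSL L)
    {u : ℝ × ℝ × ℝ → ℝ} (hu : IsTestFunction Lam3 u) :
    m * ∫ x in Lam3, u x ^ 2 ≤ ∫ x in Lam3, gradSq3 u x := by
  have hgrad : Integrable (gradSq3 u) :=
    ((hu.integrable_fderiv_apply_sq _).add (hu.integrable_fderiv_apply_sq _)).add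
      (hu.integrable_fderiv_apply_sq _)
  have hu₁ := isTestFunction_comp_rotate hu
  have hu₂ := isTestFunction_comp_rotate hu₁
  rw [← ofReal_mul_lintegral_le_iff hu.integrable_sq.integrableOn (fun x => sq_nonneg (u x))
    hgrad.integrableOn (gradSq3_nonneg u), setLIntegral_Lam3_eq, setLIntegral_Lam3_eq,
    mul_add, mul_add]
  simp only [← gradSq3_comp_rotate]
  gcongr ?_ + ?_ + ?_
  · exact ofReal_mul_setLIntegral_Sector_le hm hu
  · exact ofReal_mul_setLIntegral_Sector_le hm hu₁
  · exact ofReal_mul_setLIntegral_Sector_le hm hu₂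

/-- Proposition 3.8, (3.15): the first Rayleigh quotient of the
Dirichlet Laplacian on the Fichera layer admits the lower bound
`λ₁(Λ) ≥ inf_{L>−1} μ(L)`, where `μ(L)` is the ground energy of the Sturm–Liouville
operator `q ↦ -q'' + λ q` on `(L,∞)` with potential `λ(t) = λ₁(Γ_t)`. -/
theorem lamLam_lower_bound :
    sInf {m | ∃ L : ℝ, -1 < L ∧ m = muSL L} ≤ lamLam := by
  obtain ⟨u₀, hu₀, hu₀_ne⟩ := exists_isTestFunction (μ := volume) isOpen_Lam3 nonempty_Lam3
  refine le_csInf ⟨_, u₀, hu₀.contDiff, hu₀.hasCompactSupport, hu₀.tsupport_subset, hu₀_ne, rfl⟩ ?_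
  rintro _ ⟨u, hu, hu_supp, hu_sub, hu_ne, rfl⟩
  have hpos : 0 < ∫ x in Lam3, u x ^ 2 := (integral_nonneg fun x => sq_nonneg (u x)).lt_of_ne' hu_ne
  exact (le_div_iff₀ hpos).2
    (mul_integral_sq_le_integral_gradSq3 (fun _ => sInf_muSL_le) ⟨hu, hu_supp, hu_sub⟩)
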